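/- (Main shock-formation criterion.) Let λ > 0 and let r₀ : ℝ → ℝ be bounded and C¹ with bounded derivative, with r₀(+∞) := lim_{x→+∞} r₀(x) finite, and set δ := k(2·sup|r₀|). Suppose α ∈ ℝ satisfies: r₀'(α)·(r₀(α) + r₀(+∞)) < 0, r₀'(x)·r₀(α) < 0 for every x ≥ α, and either r₀(α)·r₀(+∞) > 0 or r₀(+∞) = 0. Suppose there exists t_c > 0 solving 1 − (2/λ)·(1 − A(t_c)⁻¹)·γ⁺(t_c)·|r₀'(α)|·√(k(2r₀(α))) = 0, where γ⁺(t) := min{ |f(η_L⁺(t,α))|, |f(2r₀(α))| }, and that −2(A(t) − 1)/√(k(η_L⁺(t,α))) + (2 − A(t)⁻¹)/√(k(2r₀(α))) ≥ 0 for every t ∈ [0, t_c]. Then a singularity forms by time t_c: there is no C² solution (r,ℓ) of the diagonal system on [0,T) × ℝ with initial data (r₀, −r₀), satisfying |r(t,x) − ℓ(t,y)| ≤ 2·sup|r₀| for all t, x, y and admitting jointly C¹ characteristic flows x₁, x₂ with ∂_α x₁ > 0, ∂_β x₂ > 0 and a C¹ correspondence map β(t,α), for any T > t_c. -/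

import Mathlib

open Real Set Filter MeasureTheory

noncomputable section

/-- `L(u) = (1/2)(u·√(1+u²) + arcsinh u)`, the antiderivative of `Q(ξ) = √(1+ξ²)` with `L 0 = 0`. -/
def Lfun (u : ℝ) : ℝ := (1/2) * (u * Real.sqrt (1 + u^2) + Real.arsinh u)

/-- `û₁(η) = L⁻¹(−η/2)`. -/
def u1hat (η : ℝ) : ℝ := Function.invFun Lfun (-η/2)

/-- `k(η) = √(1 + û₁(η)²)`. -/
def kfun (η : ℝ) : ℝ := Real.sqrt (1 + (u1hat η)^2)

/-- `f(η) = k'(η)/√(k(η))`. -/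
def ffun (η : ℝ) : ℝ := deriv kfun η / Real.sqrt (kfun η)

/-- `A(t) = exp(λ t / 2)`. -/
def Afun (lam t : ℝ) : ℝ := Real.exp (lam * t / 2)

/-- `η(t,x) = r(t,x) − ℓ(t,x)`. -/
def etafun (r l : ℝ → ℝ → ℝ) (t x : ℝ) : ℝ := r t x - l t x

/-- Weighted Riemann derivative `p(t,x) = A(t)·√(k(η(t,x)))·∂ₓr(t,x)`. -/
def pfun (lam : ℝ) (r l : ℝ → ℝ → ℝ) (t x : ℝ) : ℝ :=
  Afun lam t * Real.sqrt (kfun (etafun r l t x)) * deriv (fun y => r t y) x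

/-- Weighted Riemann derivative `q(t,x) = A(t)·√(k(η(t,x)))·∂ₓℓ(t,x)`. -/
def qfun (lam : ℝ) (r l : ℝ → ℝ → ℝ) (t x : ℝ) : ℝ :=
  Afun lam t * Real.sqrt (kfun (etafun r l t x)) * deriv (fun y => l t y) x


lemma Lfun_hasDerivAt (u : ℝ) : HasDerivAt Lfun (√(1 + u^2)) u := by
  have hpos : 0 < 1 + u^2 := by positivity
  have hs : √(1+u^2) ≠ 0 := (Real.sqrt_pos.2 hpos).ne'
  have h1 : HasDerivAt (fun u : ℝ => √(1 + u^2)) ((2*u) / (2 * √(1+u^2))) u := by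
    have : HasDerivAt (fun u : ℝ => 1 + u^2) (2*u) u := by
      simpa using (hasDerivAt_pow 2 u).const_add 1
    exact this.sqrt hpos.ne'
  have h2 := (((hasDerivAt_id u).mul h1).add (Real.hasDerivAt_arsinh u)).const_mul (1/2 : ℝ)
  have h3 : HasDerivAt Lfun _ u := h2
  convert h3 using 1
  have := Real.sq_sqrt hpos.le
  simp only [id]
  field_simp
  nlinarith

lemma Lfun_strictMono : StrictMono Lfun := by
  apply strictMono_of_deriv_pos
  intro u
  rw [(Lfun_hasDerivAt u).deriv]
  positivity

lemma Lfun_odd (u : ℝ) : Lfun (-u) = - Lfun u := by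
  simp [Lfun]; ring

lemma Lfun_ge {u : ℝ} (hu : 0 ≤ u) : u/2 ≤ Lfun u := by
  have h1 : 0 ≤ Real.arsinh u := Real.arsinh_nonneg_iff.2 hu
  have h2 : 1 ≤ √(1+u^2) := Real.one_le_sqrt.2 (by nlinarith)
  unfold Lfun
  nlinarith

lemma Lfun_continuous : Continuous Lfun :=
  continuous_iff_continuousAt.2 fun u => (Lfun_hasDerivAt u).continuousAt

lemma Lfun_surj : Function.Surjective Lfun := by
  apply Lfun_continuous.surjective
  · apply tendsto_atTop_mono' atTop _ (tendsto_id.atTop_div_const (by norm_num : (0:ℝ) < 2))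
    filter_upwards [eventually_ge_atTop 0] with u hu using Lfun_ge hu
  · apply tendsto_atBot_mono' atBot _ (tendsto_id.atBot_div_const (by norm_num : (0:ℝ) < 2))
    filter_upwards [eventually_le_atBot 0] with u hu
    have := Lfun_ge (u := -u) (by linarith)
    rw [Lfun_odd] at this
    simp only [id]; linarith

lemma Lfun_u1hat (η : ℝ) : Lfun (u1hat η) = -η/2 :=
  Function.invFun_eq (Lfun_surj _)

lemma u1hat_strictAnti : StrictAnti u1hat := by
  intro a b hab
  by_contra h
  have := Lfun_strictMono.monotone (not_lt.1 h)
  rw [Lfun_u1hat, Lfun_u1hat] at this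
  linarith

lemma u1hat_neg (η : ℝ) : u1hat (-η) = - u1hat η := by
  apply Lfun_strictMono.injective
  rw [Lfun_odd, Lfun_u1hat, Lfun_u1hat]; ring

lemma u1hat_zero : u1hat 0 = 0 := by
  have := u1hat_neg 0
  simp at this; linarith

lemma u1hat_surj : Function.Surjective u1hat := by
  intro u
  refine ⟨-2 * Lfun u, ?_⟩
  apply Lfun_strictMono.injective
  rw [Lfun_u1hat]; ring

lemma u1hat_continuous : Continuous u1hat := by
  have h : StrictMono (fun η => - u1hat η) := fun a b hab => neg_lt_neg (u1hat_strictAnti hab)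
  have hs : Function.Surjective (fun η => - u1hat η) := by
    intro u
    obtain ⟨η, h⟩ := u1hat_surj (-u)
    exact ⟨η, by simp [h]⟩
  have := (h.monotone.continuous_of_surjective hs).neg
  have e : (fun η => - -u1hat η) = u1hat := by funext η; ring
  rw [← e]; exact this

lemma kfun_sq (η : ℝ) : kfun η ^ 2 = 1 + u1hat η ^ 2 := Real.sq_sqrt (by positivity)

lemma one_le_kfun (η : ℝ) : 1 ≤ kfun η := Real.one_le_sqrt.2 (by nlinarith [sq_nonneg (u1hat η)])

lemma kfun_pos (η : ℝ) : 0 < kfun η := lt_of_lt_of_le one_pos (one_le_kfun η)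

lemma kfun_neg (η : ℝ) : kfun (-η) = kfun η := by simp [kfun, u1hat_neg]

lemma u1hat_hasDerivAt (η : ℝ) : HasDerivAt u1hat (-1 / (2 * kfun η)) η := by
  have h1 : HasDerivAt (fun u => -2 * Lfun u) (-2 * kfun η) (u1hat η) :=
    (Lfun_hasDerivAt (u1hat η)).const_mul (-2)
  have := h1.of_local_left_inverse (g := u1hat) (a := η) u1hat_continuous.continuousAt
    (by have := kfun_pos η; nlinarith)
    (Eventually.of_forall fun y => by simp only [Lfun_u1hat]; ring)
  have e : -1 / (2 * kfun η) = (-2 * kfun η)⁻¹ := by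
    rw [neg_mul, inv_neg, neg_div, one_div]
  rw [e]; exact this

def kder (η : ℝ) : ℝ := - u1hat η / (2 * kfun η ^ 2)

lemma kfun_hasDerivAt (η : ℝ) : HasDerivAt kfun (kder η) η := by
  have h1 : HasDerivAt (fun η => 1 + u1hat η ^ 2) _ η := ((u1hat_hasDerivAt η).pow 2).const_add 1
  have h2 : HasDerivAt kfun _ η := h1.sqrt (by positivity)
  convert h2 using 1
  have := kfun_pos η
  change _ = _ / (2 * kfun η)
  rw [kder]
  field_simp
  simp
  ring

lemma kfun_continuous : Continuous kfun :=
  continuous_iff_continuousAt.2 fun u => (kfun_hasDerivAt u).continuousAt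

lemma kder_abs_le (η : ℝ) : |kder η| ≤ 1 := by
  have := kfun_sq η
  rw [kder, abs_div, abs_neg, this, div_le_one (by positivity), abs_of_nonneg (a := 2 * _) (by positivity)]
  have h := sq_abs (u1hat η)
  nlinarith [sq_nonneg (|u1hat η| - 1), abs_nonneg (u1hat η)]

lemma u1hat_nonpos {η : ℝ} (h : 0 ≤ η) : u1hat η ≤ 0 := by
  rw [← u1hat_zero]; exact u1hat_strictAnti.antitone h

lemma kder_nonneg {η : ℝ} (h : 0 ≤ η) : 0 ≤ kder η := by
  have := u1hat_nonpos h
  unfold kder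
  apply div_nonneg (by linarith) (by positivity)

lemma kfun_mono {a b : ℝ} (ha : 0 ≤ a) (hab : a ≤ b) : kfun a ≤ kfun b := by
  apply Real.sqrt_le_sqrt
  have h1 := u1hat_nonpos ha
  have h2 := u1hat_strictAnti.antitone hab
  nlinarith

lemma kfun_le_of_abs {a b : ℝ} (h : |a| ≤ b) : kfun a ≤ kfun b := by
  have : kfun a = kfun |a| := by
    rcases abs_cases a with h | h <;> rw [h.1]
    rw [kfun_neg]
  rw [this]; exact kfun_mono (abs_nonneg _) h

lemma ffun_eq (η : ℝ) : ffun η = kder η / √(kfun η) := by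
  rw [ffun, (kfun_hasDerivAt η).deriv]

lemma ffun_nonneg {η : ℝ} (h : 0 ≤ η) : 0 ≤ ffun η := by
  rw [ffun_eq]; exact div_nonneg (kder_nonneg h) (Real.sqrt_nonneg _)

lemma ffun_neg (η : ℝ) : ffun (-η) = - ffun η := by
  rw [ffun_eq, ffun_eq, kder, kder, u1hat_neg, kfun_neg]; ring

lemma ffun_sq (η : ℝ) : ffun η ^ 2 = ((kfun η)⁻¹ ^ 3 - (kfun η)⁻¹ ^ 5) / 4 := by
  have hk := kfun_pos η
  rw [ffun_eq, kder, div_pow, Real.sq_sqrt hk.le, div_pow, neg_sq,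
    show u1hat η ^ 2 = kfun η ^ 2 - 1 by rw [kfun_sq]; ring]
  field_simp
  ring

lemma cubic_unimodal {y z w : ℝ} (hy : 0 ≤ y) (hyz : y ≤ z) (hzw : z ≤ w) :
    y ^ 3 - y ^ 5 ≤ z ^ 3 - z ^ 5 ∨ w ^ 3 - w ^ 5 ≤ z ^ 3 - z ^ 5 := by
  have hd : ∀ x : ℝ, HasDerivAt (fun x : ℝ => x ^ 3 - x ^ 5) (3 * x ^ 2 - 5 * x ^ 4) x := by
    intro x
    have := (hasDerivAt_pow 3 x).sub (hasDerivAt_pow 5 x)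
    norm_num at this
    exact this
  have hc : Continuous (fun x : ℝ => x ^ 3 - x ^ 5) := by fun_prop
  rcases le_total (z ^ 2) (3/5) with h | h
  · left
    have : MonotoneOn (fun x : ℝ => x ^ 3 - x ^ 5) (Icc y z) := by
      apply monotoneOn_of_deriv_nonneg (convex_Icc _ _) hc.continuousOn
      · exact fun x _ => (hd x).differentiableAt.differentiableWithinAt
      · intro x hx
        rw [interior_Icc] at hx
        rw [(hd x).deriv]
        have : x ^ 2 ≤ 3/5 := by nlinarith [hx.1, hx.2]
        nlinarith [sq_nonneg x]
    exact this ⟨le_rfl, hyz⟩ ⟨hyz, le_rfl⟩ hyz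
  · right
    have : AntitoneOn (fun x : ℝ => x ^ 3 - x ^ 5) (Icc z w) := by
      apply antitoneOn_of_deriv_nonpos (convex_Icc _ _) hc.continuousOn
      · exact fun x _ => (hd x).differentiableAt.differentiableWithinAt
      · intro x hx
        rw [interior_Icc] at hx
        rw [(hd x).deriv]
        have : 3/5 ≤ x ^ 2 := by nlinarith [hx.1, hx.2]
        nlinarith [sq_nonneg x]
    exact this ⟨le_rfl, hzw⟩ ⟨hzw, le_rfl⟩ hzw

lemma ffun_ge_min {a η b : ℝ} (ha : 0 ≤ a) (h1 : a ≤ η) (h2 : η ≤ b) :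
    min |ffun a| |ffun b| ≤ ffun η := by
  have hη : 0 ≤ ffun η := ffun_nonneg (ha.trans h1)
  have k1 := kfun_mono ha h1
  have k2 := kfun_mono (ha.trans h1) h2
  have i1 := inv_anti₀ (kfun_pos _) k1
  have i2 := inv_anti₀ (kfun_pos _) k2
  rcases cubic_unimodal (inv_nonneg.2 (kfun_pos b).le) i2 i1 with h | h
  · apply (min_le_right _ _).trans
    refine abs_le_of_sq_le_sq ?_ hη
    rw [ffun_sq, ffun_sq]; linarith
  · apply (min_le_left _ _).trans
    refine abs_le_of_sq_le_sq ?_ hη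
    rw [ffun_sq, ffun_sq]; linarith


/-- At a first touching point, the derivative from the left is nonnegative. -/
lemma left_touch {g : ℝ → ℝ} {g' s : ℝ} (hg : HasDerivAt g g' s)
    (hneg : ∀ᶠ y in nhdsWithin s (Iio s), g y < 0) (h0 : 0 ≤ g s) : 0 ≤ g' ∧ g s = 0 := by
  have hle : g s ≤ 0 := by
    refine le_of_tendsto (hg.continuousAt.tendsto.mono_left (nhdsWithin_le_nhds (s := Iio s))) ?_
    filter_upwards [hneg] with y hy using hy.le
  have h00 : g s = 0 := le_antisymm hle h0
  refine ⟨?_, h00⟩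
  have ht := hg.hasDerivWithinAt (s := Iio s)
  rw [hasDerivWithinAt_iff_tendsto_slope' (by simp)] at ht
  refine ge_of_tendsto ht ?_
  filter_upwards [hneg, self_mem_nhdsWithin] with y hy hys
  rw [slope_def_field]
  apply div_nonneg_of_nonpos
  · linarith
  · have : y < s := hys
    linarith

lemma comparison_principle
    (a b : ℝ × ℝ → ℝ) (κ : ℝ × ℝ → ℝ) (X : ℝ → ℝ) (t δ B K : ℝ)
    (hac : ContinuousOn a (Icc 0 t ×ˢ univ)) (hbc : ContinuousOn b (Icc 0 t ×ˢ univ))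
    (hκ0 : ∀ s ∈ Icc 0 t, ∀ x, 0 ≤ κ (s, x)) (hκδ : ∀ s ∈ Icc 0 t, ∀ x, κ (s, x) ≤ δ)
    (hXc : ContinuousOn X (Icc 0 t))
    (hXd : ∀ s ∈ Ioc 0 t, HasDerivAt X (κ (s, X s)) s)
    (hXB : ∀ s ∈ Icc 0 t, X s ≤ B - δ * s)
    (hinit : ∀ x, X 0 ≤ x → x ≤ B → a (0, x) ≤ 0 ∧ b (0, x) ≤ 0)
    (ha : ∀ s ∈ Ioc 0 t, ∀ x, X s ≤ x → x ≤ B - δ * s →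
      ∃ a' : ℝ × ℝ →L[ℝ] ℝ, HasFDerivAt a a' (s, x) ∧
        ∃ c h : ℝ, c ≤ K ∧ 0 ≤ h ∧ h ≤ K ∧ a' (1, κ (s, x)) ≤ c * a (s, x) + h * b (s, x))
    (hb : ∀ s ∈ Ioc 0 t, ∀ x, X s ≤ x → x ≤ B - δ * s →
      ∃ b' : ℝ × ℝ →L[ℝ] ℝ, HasFDerivAt b b' (s, x) ∧
        ∃ c h : ℝ, c ≤ K ∧ 0 ≤ h ∧ h ≤ K ∧ b' (1, -κ (s, x)) ≤ c * b (s, x) + h * a (s, x)) :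
    ∀ s ∈ Icc 0 t, ∀ x, X s ≤ x → x ≤ B - δ * s → a (s, x) ≤ 0 ∧ b (s, x) ≤ 0 := by
  intro s₁ hs₁ x₁ hx1 hx2
  by_contra hcon
  have hpos : 0 < max (a (s₁, x₁)) (b (s₁, x₁)) := by
    rw [not_and_or] at hcon
    rcases hcon with h | h
    · exact lt_max_of_lt_left (not_le.1 h)
    · exact lt_max_of_lt_right (not_le.1 h)
  set E : ℝ → ℝ := fun s => Real.exp ((2 * K + 1) * s) with hE
  have hEpos : ∀ s, 0 < E s := fun s => Real.exp_pos _
  set ε : ℝ := max (a (s₁, x₁)) (b (s₁, x₁)) / E s₁ with hε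
  have hεpos : 0 < ε := div_pos hpos (hEpos _)
  have hXmono : MonotoneOn X (Icc 0 t) := by
    apply monotoneOn_of_deriv_nonneg (convex_Icc _ _) hXc
    · intro s hs
      rw [interior_Icc] at hs
      exact (hXd s ⟨hs.1, hs.2.le⟩).differentiableAt.differentiableWithinAt
    · intro s hs
      rw [interior_Icc] at hs
      rw [(hXd s ⟨hs.1, hs.2.le⟩).deriv]
      exact hκ0 s ⟨hs.1.le, hs.2.le⟩ _
  -- the compact region
  set box : Set (ℝ × ℝ) := Icc 0 t ×ˢ univ with hbox
  have hboxcl : IsClosed box := isClosed_Icc.prod isClosed_univ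
  have hδ0 : 0 ≤ δ := (hκ0 s₁ hs₁ 0).trans (hκδ s₁ hs₁ 0)
  have hXfst : ContinuousOn (fun p : ℝ × ℝ => X p.1) box :=
    hXc.comp continuousOn_fst (fun p hp => hp.1)
  have cl1 : IsClosed {p : ℝ × ℝ | p ∈ box ∧ X p.1 ≤ p.2} :=
    hboxcl.isClosed_le hXfst continuousOn_snd
  have cl2 : IsClosed {p : ℝ × ℝ | p ∈ box ∧ p.2 ≤ B - δ * p.1} :=
    hboxcl.isClosed_le continuousOn_snd (by fun_prop)
  have cl3 : IsClosed {p : ℝ × ℝ | p ∈ box ∧ ε * E p.1 ≤ max (a p) (b p)} :=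
    hboxcl.isClosed_le (by simp only [hE]; fun_prop) (hac.sup hbc)
  set S : Set (ℝ × ℝ) := {p | p ∈ box ∧ X p.1 ≤ p.2} ∩ {p | p ∈ box ∧ p.2 ≤ B - δ * p.1} ∩
    {p | p ∈ box ∧ ε * E p.1 ≤ max (a p) (b p)} with hS
  have hScl : IsClosed S := (cl1.inter cl2).inter cl3
  have hScpt : IsCompact S := by
    apply (isCompact_Icc.prod (isCompact_Icc (a := X 0) (b := B)) :
      IsCompact (Icc (0:ℝ) t ×ˢ Icc (X 0) B)).of_isClosed_subset hScl
    rintro p ⟨⟨⟨hp, h1⟩, -, h2⟩, -⟩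
    have hp1 : p.1 ∈ Icc 0 t := hp.1
    refine ⟨hp1, ?_, ?_⟩
    · exact (hXmono ⟨le_rfl, hp1.1.trans hp1.2⟩ hp1 hp1.1).trans h1
    · nlinarith [mul_nonneg hδ0 hp1.1]
  have hmem1 : (s₁, x₁) ∈ S := by
    refine ⟨⟨⟨⟨hs₁, trivial⟩, hx1⟩, ⟨hs₁, trivial⟩, hx2⟩, ⟨hs₁, trivial⟩, ?_⟩
    simp only [hε]
    rw [div_mul_cancel₀ _ (hEpos _).ne']
  obtain ⟨⟨s, x⟩, hmem, hmin⟩ := hScpt.exists_isMinOn ⟨_, hmem1⟩ continuousOn_fst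
  obtain ⟨⟨⟨⟨hs, -⟩, hXx⟩, -, hxB⟩, -, hge⟩ := hmem
  simp only at hs hXx hxB hge
  have hs0 : 0 < s := by
    rcases hs.1.eq_or_lt with h | h
    · exfalso
      subst h
      have := hinit x hXx (by simpa using hxB)
      have h2 := max_le this.1 this.2
      have := mul_pos hεpos (hEpos 0)
      linarith
    · exact h
  -- strict bound before
  have hbefore : ∀ s' ∈ Icc 0 t, ∀ x', s' < s → X s' ≤ x' → x' ≤ B - δ * s' →
      a (s', x') < ε * E s' ∧ b (s', x') < ε * E s' := by
    intro s' hs' x' hlt h1 h2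
    rw [← max_lt_iff]
    by_contra hc
    have : (s', x') ∈ S := ⟨⟨⟨⟨hs', trivial⟩, h1⟩, ⟨hs', trivial⟩, h2⟩, ⟨hs', trivial⟩, not_lt.1 hc⟩
    have := hmin this
    simp only [mem_ofPred_eq] at this
    linarith
  have hsoc : s ∈ Ioc 0 t := ⟨hs0, hs.2⟩
  obtain ⟨a', ha', ca, hha, hca, hha0, hhaK, hae⟩ := ha s hsoc x hXx hxB
  obtain ⟨b', hb', cb, hhb, hcb, hhb0, hhbK, hbe⟩ := hb s hsoc x hXx hxB
  have hEd : HasDerivAt (fun s => ε * E s) (ε * (E s * (2 * K + 1))) s := by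
    have : HasDerivAt (fun s : ℝ => (2*K+1) * s) (2*K+1) s := by
      simpa using (hasDerivAt_id s).const_mul (2*K+1)
    exact this.exp.const_mul ε
  have hsleft : ∀ᶠ y in nhdsWithin s (Iio s), y ∈ Icc 0 t ∧ y < s := by
    have : ∀ᶠ y in nhdsWithin s (Iio s), 0 < y :=
      mem_nhdsWithin_of_mem_nhds (Ioi_mem_nhds hs0)
    filter_upwards [this, self_mem_nhdsWithin] with y h1 h2
    exact ⟨⟨h1.le, (le_of_lt h2).trans hs.2⟩, h2⟩
  -- curve for a
  have curveA : ∃ γ : ℝ → ℝ, γ s = x ∧ HasDerivAt γ (κ (s, x)) s ∧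
      ∀ᶠ y in nhdsWithin s (Iio s), X y ≤ γ y ∧ γ y ≤ B - δ * y := by
    rcases hXx.eq_or_lt with h | h
    · refine ⟨X, h, by simpa [h] using hXd s hsoc, ?_⟩
      filter_upwards [hsleft] with y hy
      exact ⟨le_rfl, hXB y hy.1⟩
    · refine ⟨fun y => x + κ (s, x) * (y - s), by simp, ?_, ?_⟩
      · simpa using (((hasDerivAt_id s).sub_const s).const_mul (κ (s, x))).const_add x
      · have hev : ∀ᶠ y in nhdsWithin s (Iio s), X y < x + κ (s, x) * (y - s) := by
          apply mem_nhdsWithin_of_mem_nhds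
          have c1 : ContinuousAt X s := (hXd s hsoc).continuousAt
          have c2 : ContinuousAt (fun y => x + κ (s, x) * (y - s)) s := by fun_prop
          exact c1.eventually_lt c2 (by simpa using h)
        filter_upwards [hsleft, hev] with y hy hy2
        refine ⟨hy2.le, ?_⟩
        have h1 := hκ0 s hs x
        have h2 : κ (s, x) * (y - s) ≤ 0 := mul_nonpos_of_nonneg_of_nonpos h1 (by linarith [hy.2])
        have h3 : δ * y ≤ δ * s := mul_le_mul_of_nonneg_left hy.2.le hδ0
        linarith
  have curveB : ∃ γ : ℝ → ℝ, γ s = x ∧ HasDerivAt γ (-κ (s, x)) s ∧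
      ∀ᶠ y in nhdsWithin s (Iio s), X y ≤ γ y ∧ γ y ≤ B - δ * y := by
    refine ⟨fun y => x + (-κ (s, x)) * (y - s), by simp, ?_, ?_⟩
    · simpa using (((hasDerivAt_id s).sub_const s).const_mul (-κ (s, x))).const_add x
    · filter_upwards [hsleft] with y hy
      have h1 := hκ0 s hs x
      have h2 := hκδ s hs x
      have h3 := hXmono hy.1 hs hy.2.le
      constructor
      · nlinarith [mul_nonneg h1 (sub_nonneg.2 hy.2.le)]
      · nlinarith [mul_le_mul_of_nonneg_right h2 (sub_nonneg.2 hy.2.le)]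
  -- generic: comp of a function with a curve
  have hcomp : ∀ (u : ℝ × ℝ → ℝ) (u' : ℝ × ℝ →L[ℝ] ℝ) (γ : ℝ → ℝ) (v : ℝ), HasFDerivAt u u' (s, x) →
      γ s = x → HasDerivAt γ v s → HasDerivAt (fun y => u (y, γ y) - ε * E y)
        (u' (1, v) - ε * (E s * (2 * K + 1))) s := by
    intro u u' γ v hu hγ hv
    have h1 : HasDerivAt (fun y => (y, γ y)) (1, v) s := (hasDerivAt_id s).prodMk hv
    have h2 : HasFDerivAt u u' (s, γ s) := by rw [hγ]; exact hu
    exact (h2.comp_hasDerivAt s h1).sub hEd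
  have hEs := mul_pos hεpos (hEpos s)
  -- upper bounds at the point
  have key : ∀ (u v : ℝ × ℝ → ℝ) (u' v' : ℝ × ℝ →L[ℝ] ℝ) (w c h : ℝ), HasFDerivAt u u' (s, x) →
      HasFDerivAt v v' (s, x) →
      (∃ γ : ℝ → ℝ, γ s = x ∧ HasDerivAt γ w s ∧
        ∀ᶠ y in nhdsWithin s (Iio s), X y ≤ γ y ∧ γ y ≤ B - δ * y) →
      (∀ s' ∈ Icc 0 t, ∀ x', s' < s → X s' ≤ x' → x' ≤ B - δ * s' →
        u (s', x') < ε * E s' ∧ v (s', x') < ε * E s') →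
      c ≤ K → 0 ≤ h → h ≤ K → u' (1, w) ≤ c * u (s, x) + h * v (s, x) →
      ε * E s ≤ u (s, x) → False := by
    intro u v u' v' w c h hu hv hγ hbef hc h0 hK he hge
    obtain ⟨γ, hγs, hγd, hγm⟩ := hγ
    have hu1 := hcomp u u' γ w hu hγs hγd
    have hv1 := hcomp v v' γ w hv hγs hγd
    have := left_touch hu1 (by
      filter_upwards [hsleft, hγm] with y h1 h2
      have := (hbef y h1.1 (γ y) h1.2 h2.1 h2.2).1
      linarith) (by rw [hγs]; linarith)
    have hvle : v (s, γ s) - ε * E s ≤ 0 := by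
      refine le_of_tendsto (hv1.continuousAt.tendsto.mono_left (nhdsWithin_le_nhds (s := Iio s))) ?_
      filter_upwards [hsleft, hγm] with y h1 h2
      have := (hbef y h1.1 (γ y) h1.2 h2.1 h2.2).2
      linarith
    rw [hγs] at this hvle
    obtain ⟨t1, t2⟩ := this
    have e1 : u (s, x) = ε * E s := by linarith
    rw [e1] at he
    have : c * (ε * E s) ≤ K * (ε * E s) := mul_le_mul_of_nonneg_right hc hEs.le
    have : h * v (s, x) ≤ h * (ε * E s) := mul_le_mul_of_nonneg_left (by linarith) h0
    have : h * (ε * E s) ≤ K * (ε * E s) := mul_le_mul_of_nonneg_right hK hEs.le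
    linarith
  rcases le_max_iff.1 hge with h | h
  · exact key a b a' b' _ ca hha ha' hb' curveA hbefore hca hha0 hhaK hae h
  · exact key b a b' a' _ cb hhb hb' ha' curveB
      (fun s' h1 x' h2 h3 h4 => (hbefore s' h1 x' h2 h3 h4).symm) hcb hhb0 hhbK hbe h


lemma pde_diff (lam : ℝ) (u κ v : ℝ × ℝ → ℝ) (p : ℝ × ℝ)
    (hu : ContDiffAt ℝ 2 u p) (hκ : DifferentiableAt ℝ κ p) (hv : DifferentiableAt ℝ v p)
    (heq : ∀ᶠ q in nhds p, fderiv ℝ u q (1, 0) + κ q * fderiv ℝ u q (0, 1)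
      = -(lam/2) * (u q - v q)) :
    ∃ R' : ℝ × ℝ →L[ℝ] ℝ, HasFDerivAt (fun q => fderiv ℝ u q (0, 1)) R' p ∧
      R' (1, κ p) = - fderiv ℝ κ p (0, 1) * fderiv ℝ u p (0, 1)
        - (lam/2) * (fderiv ℝ u p (0, 1) - fderiv ℝ v p (0, 1)) := by
  have hF : DifferentiableAt ℝ (fderiv ℝ u) p :=
    (hu.fderiv_right (m := 1) (by norm_num)).differentiableAt (by norm_num)
  have hud : DifferentiableAt ℝ u p := hu.differentiableAt (by norm_num)
  have hsymm : fderiv ℝ (fderiv ℝ u) p (1, 0) (0, 1) = fderiv ℝ (fderiv ℝ u) p (0, 1) (1, 0) :=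
    (hu.isSymmSndFDerivAt (by simp)) _ _
  have hev : ∀ w : ℝ × ℝ, HasFDerivAt (fun q => fderiv ℝ u q w)
      ((fderiv ℝ (fderiv ℝ u) p).flip w) p := by
    intro w
    have := hF.hasFDerivAt.clm_apply (hasFDerivAt_const w p)
    simpa using this
  refine ⟨_, hev (0, 1), ?_⟩
  have h1 : HasFDerivAt (fun q => fderiv ℝ u q (1, 0))
      (-(κ p • (fderiv ℝ (fderiv ℝ u) p).flip (0, 1) + fderiv ℝ u p (0, 1) • fderiv ℝ κ p)
        - (lam/2) • (fderiv ℝ u p - fderiv ℝ v p)) p := by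
    have h2 := (hκ.hasFDerivAt.mul (hev (0, 1))).neg.sub
      ((hud.hasFDerivAt.sub hv.hasFDerivAt).const_mul (lam/2))
    refine h2.congr_of_eventuallyEq ?_
    filter_upwards [heq] with q hq
    simp
    linarith
  have h3 := DFunLike.congr_fun (h1.unique (hev (1, 0))) (0, 1)
  have h4 : ((1, κ p) : ℝ × ℝ) = (1, 0) + κ p • (0, 1) := by simp
  rw [h4, map_add, map_smul]
  simp at h3 ⊢
  rw [hsymm, ← h3]
  ring

def Rx (T : ℝ) (u : ℝ × ℝ → ℝ) (p : ℝ × ℝ) : ℝ :=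
  fderivWithin ℝ u (Ico 0 T ×ˢ (univ : Set ℝ)) p (0, 1)

lemma slab_nhds {T : ℝ} {p : ℝ × ℝ} (hp : p.1 ∈ Ioo 0 T) :
    (Ico 0 T ×ˢ (univ : Set ℝ)) ∈ nhds p := by
  have : Ioo 0 T ×ˢ (univ : Set ℝ) ∈ nhds p := (isOpen_Ioo.prod isOpen_univ).mem_nhds ⟨hp, trivial⟩
  exact mem_of_superset this (prod_mono Ioo_subset_Ico_self le_rfl)

lemma slab_uniqueDiff (T : ℝ) : UniqueDiffOn ℝ (Ico 0 T ×ˢ (univ : Set ℝ)) :=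
  (uniqueDiffOn_Ico 0 T).prod uniqueDiffOn_univ

lemma Rx_continuousOn {T : ℝ} {u : ℝ × ℝ → ℝ} (hu : ContDiffOn ℝ 2 u (Ico 0 T ×ˢ univ)) :
    ContinuousOn (Rx T u) (Ico 0 T ×ˢ univ) :=
  (hu.continuousOn_fderivWithin (slab_uniqueDiff T) (by norm_num)).clm_apply continuousOn_const

lemma Rx_hasDerivAt {T : ℝ} {u : ℝ × ℝ → ℝ} (hu : ContDiffOn ℝ 2 u (Ico 0 T ×ˢ univ))
    {t : ℝ} (ht : t ∈ Ico 0 T) (x : ℝ) : HasDerivAt (fun y => u (t, y)) (Rx T u (t, x)) x := by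
  have h1 := ((hu.differentiableOn (by norm_num)) (t, x) ⟨ht, trivial⟩).hasFDerivWithinAt
  have h2 : HasDerivWithinAt (fun y : ℝ => (t, y)) ((0 : ℝ), (1 : ℝ)) univ x :=
    ((hasDerivAt_const x t).prodMk (hasDerivAt_id x)).hasDerivWithinAt
  have := h1.comp_hasDerivWithinAt x h2 (fun y _ => ⟨ht, trivial⟩)
  exact hasDerivWithinAt_univ.1 this

lemma Rx_eq {T : ℝ} {u : ℝ × ℝ → ℝ} {p : ℝ × ℝ} (hp : p.1 ∈ Ioo 0 T) :
    Rx T u p = fderiv ℝ u p (0, 1) := by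
  rw [Rx, fderivWithin_of_mem_nhds (slab_nhds hp)]

lemma pde_pack {lam T : ℝ} {u v κ : ℝ × ℝ → ℝ} (hu : ContDiffOn ℝ 2 u (Ico 0 T ×ˢ univ))
    (hv : ContDiffOn ℝ 2 v (Ico 0 T ×ˢ univ))
    (heq : ∀ t ∈ Ioo 0 T, ∀ x, deriv (fun s => u (s, x)) t + κ (t, x) * deriv (fun y => u (t, y)) x
      = -(lam/2) * (u (t, x) - v (t, x)))
    {p : ℝ × ℝ} (hp : p.1 ∈ Ioo 0 T) {κ' : ℝ × ℝ →L[ℝ] ℝ} (hκ : HasFDerivAt κ κ' p) :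
    ∃ R' u' : ℝ × ℝ →L[ℝ] ℝ, HasFDerivAt (Rx T u) R' p ∧ HasFDerivAt u u' p ∧
      u' (0, 1) = Rx T u p ∧ u' (1, κ p) = -(lam/2) * (u p - v p) ∧
      R' (1, κ p) = - κ' (0, 1) * Rx T u p - (lam/2) * (Rx T u p - Rx T v p) := by
  have hd : ∀ q : ℝ × ℝ, q.1 ∈ Ioo 0 T → HasFDerivAt u (fderiv ℝ u q) q := fun q hq =>
    ((hu.contDiffAt (slab_nhds hq)).differentiableAt (by norm_num)).hasFDerivAt
  have heq' : ∀ q : ℝ × ℝ, q.1 ∈ Ioo 0 T → fderiv ℝ u q (1, 0) + κ q * fderiv ℝ u q (0, 1)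
      = -(lam/2) * (u q - v q) := by
    rintro ⟨t, x⟩ hq
    have e := heq t hq x
    have h2 := Rx_hasDerivAt hu (Ioo_subset_Ico_self hq) x
    have h3 : HasDerivAt (fun s => u (s, x)) (fderiv ℝ u (t, x) (1, 0)) t :=
      (hd (t, x) hq).comp_hasDerivAt t ((hasDerivAt_id t).prodMk (hasDerivAt_const t x))
    rw [h2.deriv, h3.deriv, Rx_eq hq] at e
    exact e
  have hnb : ∀ᶠ q : ℝ × ℝ in nhds p, q.1 ∈ Ioo 0 T :=
    continuousAt_fst.eventually (isOpen_Ioo.mem_nhds hp)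
  obtain ⟨R', hR, hRe⟩ := pde_diff lam u κ v p (hu.contDiffAt (slab_nhds hp)) hκ.differentiableAt
    ((hv.contDiffAt (slab_nhds hp)).differentiableAt (by norm_num)) (hnb.mono heq')
  refine ⟨R', fderiv ℝ u p, ?_, hd p hp, (Rx_eq hp).symm, ?_, ?_⟩
  · apply hR.congr_of_eventuallyEq
    filter_upwards [hnb] with q hq using Rx_eq hq
  · rw [← heq' p hp, show ((1, κ p) : ℝ × ℝ) = (1, 0) + κ p • (0, 1) by simp, map_add, map_smul,
      smul_eq_mul]
  · rw [hRe, hκ.fderiv, Rx_eq hp, Rx_eq hp]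


lemma Afun_hasDerivAt (lam s : ℝ) : HasDerivAt (Afun lam) (lam/2 * Afun lam s) s := by
  have h : HasDerivAt (fun t : ℝ => lam * t / 2) (lam/2) s := by
    have := ((hasDerivAt_id s).const_mul lam).div_const 2
    simpa using this
  have h2 : HasDerivAt (Afun lam) _ s := h.exp
  rw [mul_comm]; exact h2

lemma Afun_pos (lam s : ℝ) : 0 < Afun lam s := Real.exp_pos _

lemma core (lam : ℝ) (hlam : 0 < lam) (r m : ℝ × ℝ → ℝ) (T tc : ℝ) (htc : 0 < tc) (hT : tc < T)
    (hr : ContDiffOn ℝ 2 r (Ico 0 T ×ˢ univ)) (hm : ContDiffOn ℝ 2 m (Ico 0 T ×ˢ univ))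
    (her : ∀ t ∈ Ioo 0 T, ∀ x, deriv (fun s => r (s, x)) t
      + kfun (r (t, x) + m (t, x)) * deriv (fun y => r (t, y)) x = -(lam/2) * (r (t, x) - m (t, x)))
    (hem : ∀ t ∈ Ioo 0 T, ∀ x, deriv (fun s => m (s, x)) t
      + (-kfun (r (t, x) + m (t, x))) * deriv (fun y => m (t, y)) x
        = -(lam/2) * (m (t, x) - r (t, x)))
    (r₀ : ℝ → ℝ) (hr0 : ∀ x, r (0, x) = r₀ x) (hm0 : ∀ x, m (0, x) = r₀ x) (δ : ℝ)
    (hδ : ∀ t ∈ Ico 0 T, ∀ x, kfun (r (t, x) + m (t, x)) ≤ δ)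
    (X : ℝ → ℝ) (α : ℝ) (hX0 : X 0 = α)
    (hXd : ∀ t ∈ Ico 0 T, HasDerivAt X (kfun (r (t, X t) + m (t, X t))) t)
    (hd : ∀ x, α ≤ x → deriv r₀ x < 0)
    (hanti : AntitoneOn r₀ (Ici α))
    (ρ : ℝ) (hρ : ρ = r₀ (α + 2 * δ * tc)) (hρ0 : 0 ≤ ρ)
    (γ : ℝ) (hγ : γ = min |ffun ((Afun lam tc)⁻¹ * (ρ + r₀ α) + 2 * ρ * (1 - (Afun lam tc)⁻¹))|
      |ffun (2 * r₀ α)|)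
    (hroot : 1 - (2/lam) * (1 - (Afun lam tc)⁻¹) * γ * |deriv r₀ α| * √(kfun (2 * r₀ α)) = 0) :
    False := by
  have hsub : Icc 0 tc ⊆ Ico 0 T := fun s hs => ⟨hs.1, lt_of_le_of_lt hs.2 hT⟩
  have hsub' : Ioc 0 tc ⊆ Ioo 0 T := fun s hs => ⟨hs.1, lt_of_le_of_lt hs.2 hT⟩
  have hsub2 : (Icc 0 tc ×ˢ (univ : Set ℝ)) ⊆ Ico 0 T ×ˢ univ := prod_mono hsub le_rfl
  set κ : ℝ × ℝ → ℝ := fun p => kfun (r p + m p) with hκdef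
  have hδ1 : 0 < δ := lt_of_lt_of_le (kfun_pos _) (hδ 0 ⟨le_rfl, htc.trans hT⟩ 0)
  set R := Rx T r with hR
  set N := Rx T m with hN
  have hRc : ContinuousOn R (Icc 0 tc ×ˢ univ) := (Rx_continuousOn hr).mono hsub2
  have hNc : ContinuousOn N (Icc 0 tc ×ˢ univ) := (Rx_continuousOn hm).mono hsub2
  have hrc : ContinuousOn r (Icc 0 tc ×ˢ univ) := hr.continuousOn.mono hsub2
  have hmc : ContinuousOn m (Icc 0 tc ×ˢ univ) := hm.continuousOn.mono hsub2
  -- differentiability package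
  have pack : ∀ p : ℝ × ℝ, p.1 ∈ Ioc 0 tc → ∃ R' N' r' m' : ℝ × ℝ →L[ℝ] ℝ,
      HasFDerivAt R R' p ∧ HasFDerivAt N N' p ∧ HasFDerivAt r r' p ∧ HasFDerivAt m m' p ∧
      m' (0, 1) = N p ∧
      r' (1, κ p) = -(lam/2) * (r p - m p) ∧ m' (1, -κ p) = -(lam/2) * (m p - r p) ∧
      R' (1, κ p) = -(kder (r p + m p) * (R p + N p)) * R p - (lam/2) * (R p - N p) ∧
      N' (1, -κ p) = (kder (r p + m p) * (R p + N p)) * N p - (lam/2) * (N p - R p) := by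
    intro p hp
    have hp' := hsub' hp
    have e1 : HasFDerivAt r (fderiv ℝ r p) p :=
      ((hr.contDiffAt (slab_nhds hp')).differentiableAt (by norm_num)).hasFDerivAt
    have e2 : HasFDerivAt m (fderiv ℝ m p) p :=
      ((hm.contDiffAt (slab_nhds hp')).differentiableAt (by norm_num)).hasFDerivAt
    have hκd : HasFDerivAt κ (kder (r p + m p) • (fderiv ℝ r p + fderiv ℝ m p)) p :=
      HasDerivAt.comp_hasFDerivAt (h₂ := kfun) (f := r + m) p (kfun_hasDerivAt (r p + m p)) (e1.add e2)
    obtain ⟨R', r', h1, h2, h3, h4, h5⟩ := pde_pack hr hm her hp' hκd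
    obtain ⟨N', m', g1, g2, g3, g4, g5⟩ := pde_pack (κ := fun p => - κ p) hm hr hem hp' hκd.neg
    have k1 : (fderiv ℝ r p) (0, 1) = R p := (Rx_eq hp').symm
    have k2 : (fderiv ℝ m p) (0, 1) = N p := (Rx_eq hp').symm
    refine ⟨R', N', r', m', h1, g1, h2, g2, g3, h4, g4, ?_, ?_⟩
    · rw [h5]; simp [k1, k2]; simp only [hR, hN]; ring
    · rw [g5]; simp [k1, k2]; simp only [hR, hN]; ring
  set B := α + 2 * δ * tc with hB
  have hXc : ContinuousOn X (Icc 0 tc) := fun s hs =>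
    (hXd s (hsub hs)).continuousAt.continuousWithinAt
  have hXle : ∀ s ∈ Icc 0 tc, X s ≤ α + δ * s := by
    have : AntitoneOn (fun s => X s - δ * s) (Icc 0 tc) := by
      apply antitoneOn_of_deriv_nonpos (convex_Icc _ _) (hXc.sub (by fun_prop))
      · intro s hs
        rw [interior_Icc] at hs
        exact ((hXd s (hsub ⟨hs.1.le, hs.2.le⟩)).differentiableAt.sub (by fun_prop)).differentiableWithinAt
      · intro s hs
        rw [interior_Icc] at hs
        have hs' := hsub ⟨hs.1.le, hs.2.le⟩
        have h1 : HasDerivAt (fun s => δ * s) δ s := by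
          simpa using (hasDerivAt_id s).const_mul δ
        have h2 : HasDerivAt (fun s => X s - δ * s) _ s := (hXd s hs').sub h1
        refine h2.deriv.le.trans ?_
        linarith [hδ s hs' (X s)]
    intro s hs
    have := this ⟨le_rfl, htc.le⟩ hs hs.1
    simp only [hX0] at this
    linarith
  have hXB : ∀ s ∈ Icc 0 tc, X s ≤ B - δ * s := by
    intro s hs
    have := hXle s hs
    have h2 : δ * s ≤ δ * tc := mul_le_mul_of_nonneg_left hs.2 hδ1.le
    rw [hB]; linarith
  have hXge : ∀ s ∈ Icc 0 tc, α ≤ X s := by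
    have : MonotoneOn X (Icc 0 tc) := by
      apply monotoneOn_of_deriv_nonneg (convex_Icc _ _) hXc
      · intro s hs
        rw [interior_Icc] at hs
        exact (hXd s (hsub ⟨hs.1.le, hs.2.le⟩)).differentiableAt.differentiableWithinAt
      · intro s hs
        rw [interior_Icc] at hs
        rw [(hXd s (hsub ⟨hs.1.le, hs.2.le⟩)).deriv]
        exact (kfun_pos _).le
    intro s hs
    have := this ⟨le_rfl, htc.le⟩ hs hs.1
    rwa [hX0] at this
  have hR0 : ∀ x, R (0, x) = deriv r₀ x := by
    intro x
    have := Rx_hasDerivAt hr (t := 0) ⟨le_rfl, htc.trans hT⟩ x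
    simp only [hr0] at this
    exact this.deriv.symm
  have hN0 : ∀ x, N (0, x) = deriv r₀ x := by
    intro x
    have := Rx_hasDerivAt hm (t := 0) ⟨le_rfl, htc.trans hT⟩ x
    simp only [hm0] at this
    exact this.deriv.symm
  -- sign of the derivatives
  obtain ⟨C, hC⟩ : ∃ C, ∀ p ∈ Icc 0 tc ×ˢ Icc α B, ‖R p + N p‖ ≤ C :=
    (isCompact_Icc.prod isCompact_Icc).exists_bound_of_continuousOn
      ((hRc.add hNc).mono (prod_mono le_rfl (subset_univ _)))
  have hC0 : 0 ≤ C := (norm_nonneg _).trans (hC (0, α) ⟨⟨le_rfl, htc.le⟩, ⟨le_rfl, by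
    have := mul_pos hδ1 htc
    rw [hB]; linarith⟩⟩)
  have hkb : ∀ s ∈ Ioc 0 tc, ∀ x, X s ≤ x → x ≤ B - δ * s →
      |kder (r (s, x) + m (s, x)) * (R (s, x) + N (s, x))| ≤ C := by
    intro s hs x h1 h2
    rw [abs_mul]
    have e1 := kder_abs_le (r (s, x) + m (s, x))
    have e2 := hC (s, x) ⟨⟨hs.1.le, hs.2⟩, ⟨(hXge s ⟨hs.1.le, hs.2⟩).trans h1, by
      have := mul_pos hδ1 hs.1
      linarith⟩⟩
    rw [Real.norm_eq_abs] at e2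
    nlinarith [abs_nonneg (kder (r (s, x) + m (s, x))), abs_nonneg (R (s, x) + N (s, x))]
  have hsign := comparison_principle R N κ X tc δ B (C + lam) hRc hNc
    (fun s hs x => (kfun_pos _).le) (fun s hs x => hδ s (hsub hs) x) hXc
    (fun s hs => hXd s (hsub ⟨hs.1.le, hs.2⟩)) hXB
    (fun x hx _ => by
      rw [hX0] at hx
      rw [hR0, hN0]
      exact ⟨(hd x hx).le, (hd x hx).le⟩)
    (fun s hs x h1 h2 => by
      obtain ⟨R', N', r', m', a1, a2, a3, a4, a5, a6, a7, a8, a9⟩ := pack (s, x) hs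
      have := abs_le.1 (hkb s hs x h1 h2)
      refine ⟨R', a1, -(kder (r (s, x) + m (s, x)) * (R (s, x) + N (s, x))) - lam/2, lam/2,
        by linarith [this.1], by linarith, by linarith, ?_⟩
      rw [a8]; linarith)
    (fun s hs x h1 h2 => by
      obtain ⟨R', N', r', m', a1, a2, a3, a4, a5, a6, a7, a8, a9⟩ := pack (s, x) hs
      have := abs_le.1 (hkb s hs x h1 h2)
      refine ⟨N', a2, (kder (r (s, x) + m (s, x)) * (R (s, x) + N (s, x))) - lam/2, lam/2,
        by linarith [this.2], by linarith, by linarith, ?_⟩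
      rw [a9]; linarith)
  -- lower bound
  have hlow := comparison_principle (fun p => ρ - r p) (fun p => ρ - m p) κ X tc δ B lam
    (continuousOn_const.sub hrc) (continuousOn_const.sub hmc)
    (fun s hs x => (kfun_pos _).le) (fun s hs x => hδ s (hsub hs) x) hXc
    (fun s hs => hXd s (hsub ⟨hs.1.le, hs.2⟩)) hXB
    (fun x hx hx2 => by
      rw [hX0] at hx
      simp only [hr0, hm0]
      have := hanti (show x ∈ Ici α from hx) (show B ∈ Ici α from hx.trans hx2) hx2
      rw [← hρ] at this
      constructor <;> linarith)
    (fun s hs x h1 h2 => by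
      obtain ⟨R', N', r', m', a1, a2, a3, a4, a5, a6, a7, a8, a9⟩ := pack (s, x) hs
      refine ⟨-r', a3.const_sub ρ, - (lam/2), lam/2,
        by linarith, by linarith, by linarith, ?_⟩
      rw [neg_apply, a6]; linarith)
    (fun s hs x h1 h2 => by
      obtain ⟨R', N', r', m', a1, a2, a3, a4, a5, a6, a7, a8, a9⟩ := pack (s, x) hs
      refine ⟨-m', a4.const_sub ρ, - (lam/2), lam/2,
        by linarith, by linarith, by linarith, ?_⟩
      rw [neg_apply, a7]; linarith)
  -- along the characteristic
  have hmaps : MapsTo (fun s => (s, X s)) (Icc 0 tc) (Icc 0 tc ×ˢ univ) := fun s hs => ⟨hs, trivial⟩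
  have hcurve : ContinuousOn (fun s => (s, X s)) (Icc 0 tc) := continuousOn_id.prodMk hXc
  have rc : ContinuousOn (fun s => r (s, X s)) (Icc 0 tc) := hrc.comp hcurve hmaps
  have mc : ContinuousOn (fun s => m (s, X s)) (Icc 0 tc) := hmc.comp hcurve hmaps
  have Rc : ContinuousOn (fun s => R (s, X s)) (Icc 0 tc) := hRc.comp hcurve hmaps
  have hA : Continuous (Afun lam) := continuous_iff_continuousAt.2 fun s =>
    (Afun_hasDerivAt lam s).continuousAt
  have hNs : ∀ s ∈ Icc 0 tc, N (s, X s) ≤ 0 := fun s hs =>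
    (hsign s hs (X s) le_rfl (hXB s hs)).2
  have hms : ∀ s ∈ Icc 0 tc, ρ ≤ m (s, X s) := fun s hs => by
    have := (hlow s hs (X s) le_rfl (hXB s hs)).2
    linarith
  have hder : ∀ s ∈ Ioc 0 tc,
      HasDerivAt (fun s => r (s, X s)) (-(lam/2) * (r (s, X s) - m (s, X s))) s ∧
      HasDerivAt (fun s => r (s, X s) + m (s, X s)) (2 * κ (s, X s) * N (s, X s)) s ∧
      HasDerivAt (fun s => R (s, X s)) (-(kder (r (s, X s) + m (s, X s)) * (R (s, X s) + N (s, X s)))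
        * R (s, X s) - (lam/2) * (R (s, X s) - N (s, X s))) s := by
    intro s hs
    obtain ⟨R', N', r', m', a1, a2, a3, a4, a5, a6, a7, a8, a9⟩ := pack (s, X s) hs
    have hc : HasDerivAt (fun s => (s, X s)) (1, κ (s, X s)) s :=
      (hasDerivAt_id s).prodMk (hXd s (hsub ⟨hs.1.le, hs.2⟩))
    have b1 : HasDerivAt (fun s => r (s, X s)) (r' (1, κ (s, X s))) s := a3.comp_hasDerivAt s hc
    have b2 : HasDerivAt (fun s => m (s, X s)) (m' (1, κ (s, X s))) s := a4.comp_hasDerivAt s hc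
    have b3 : HasDerivAt (fun s => R (s, X s)) (R' (1, κ (s, X s))) s :=
      HasFDerivAt.comp_hasDerivAt (l := R) (l' := R') s a1 hc
    have e : m' (1, κ (s, X s)) = -(lam/2) * (m (s, X s) - r (s, X s)) + 2 * κ (s, X s) * N (s, X s) := by
      rw [show ((1, κ (s, X s)) : ℝ × ℝ) = (1, -κ (s, X s)) + (2 * κ (s, X s)) • (0, 1) by
        simp; ring, map_add, map_smul, a7, a5, smul_eq_mul]
    rw [a6] at b1
    rw [e] at b2
    rw [a8] at b3
    refine ⟨b1, ?_, b3⟩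
    have b12 := b1.add b2
    rw [show 2 * κ (s, X s) * N (s, X s) = -(lam / 2) * (r (s, X s) - m (s, X s)) +
      (-(lam / 2) * (m (s, X s) - r (s, X s)) + 2 * κ (s, X s) * N (s, X s)) by ring]
    exact b12
  have h0mem : (0:ℝ) ∈ Icc 0 tc := ⟨le_rfl, htc.le⟩
  have hetaU : ∀ s ∈ Icc 0 tc, r (s, X s) + m (s, X s) ≤ 2 * r₀ α := by
    have : AntitoneOn (fun s => r (s, X s) + m (s, X s)) (Icc 0 tc) := by
      apply antitoneOn_of_deriv_nonpos (convex_Icc _ _) (rc.add mc)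
      · intro s hs
        rw [interior_Icc] at hs
        exact (hder s ⟨hs.1, hs.2.le⟩).2.1.differentiableAt.differentiableWithinAt
      · intro s hs
        rw [interior_Icc] at hs
        refine (hder s ⟨hs.1, hs.2.le⟩).2.1.deriv.le.trans ?_
        have h1 := hNs s ⟨hs.1.le, hs.2.le⟩
        have h2 : 0 < κ (s, X s) := kfun_pos _
        exact mul_nonpos_of_nonneg_of_nonpos (by linarith) h1
    intro s hs
    have := this h0mem hs hs.1
    simp only [hX0, hr0, hm0] at this
    linarith
  have hetaL : ∀ s ∈ Icc 0 tc, (Afun lam tc)⁻¹ * (ρ + r₀ α) + 2 * ρ * (1 - (Afun lam tc)⁻¹)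
      ≤ r (s, X s) + m (s, X s) := by
    have : MonotoneOn (fun s => Afun lam s * (r (s, X s) - ρ)) (Icc 0 tc) := by
      have hdd : ∀ s ∈ Ioo 0 tc, HasDerivAt (fun s => Afun lam s * (r (s, X s) - ρ)) 
          (lam/2 * Afun lam s * (r (s, X s) - ρ) + Afun lam s * (-(lam/2) * (r (s, X s) - m (s, X s)))) s :=
        fun s hs => (Afun_hasDerivAt lam s).mul ((hder s ⟨hs.1, hs.2.le⟩).1.sub_const ρ)
      apply monotoneOn_of_deriv_nonneg (convex_Icc _ _)
        (hA.continuousOn.mul (rc.sub continuousOn_const))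
      · intro s hs
        rw [interior_Icc] at hs
        exact (hdd s hs).differentiableAt.differentiableWithinAt
      · intro s hs
        rw [interior_Icc] at hs
        refine le_trans ?_ (hdd s hs).deriv.ge
        have h1 := hms s ⟨hs.1.le, hs.2.le⟩
        have h2 := Afun_pos lam s
        have : 0 ≤ lam/2 * Afun lam s * (m (s, X s) - ρ) :=
          mul_nonneg (by positivity) (by linarith)
        linarith
    intro s hs
    have h1 := this h0mem hs hs.1
    have hA0 : Afun lam 0 = 1 := by simp [Afun]
    simp only [hX0, hr0, hA0, one_mul] at h1
    have h2 := hms s hs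
    have hAs := Afun_pos lam s
    have hAt := Afun_pos lam tc
    have hle : Afun lam s ≤ Afun lam tc := by
      unfold Afun
      apply Real.exp_le_exp.2
      have := mul_le_mul_of_nonneg_left hs.2 hlam.le
      linarith
    have h3 : (Afun lam tc)⁻¹ ≤ (Afun lam s)⁻¹ := inv_anti₀ hAs hle
    have h4 : 0 ≤ r₀ α - ρ := by
      have := hanti self_mem_Ici (show B ∈ Ici α from by
        have := mul_pos hδ1 htc
        show α ≤ B
        rw [hB]; linarith) (by
        have := mul_pos hδ1 htc
        rw [hB]; linarith)
      rw [← hρ] at this; linarith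
    have h5 : (Afun lam s)⁻¹ * (r₀ α - ρ) ≤ r (s, X s) - ρ := by
      rw [inv_mul_le_iff₀ hAs]; exact h1
    have h6 := mul_le_mul_of_nonneg_right h3 h4
    linarith
  have hL0 : 0 ≤ (Afun lam tc)⁻¹ * (ρ + r₀ α) + 2 * ρ * (1 - (Afun lam tc)⁻¹) := by
    have hA1 : 1 ≤ Afun lam tc := Real.one_le_exp (by positivity)
    have := inv_le_one_of_one_le₀ hA1
    have hra : ρ ≤ r₀ α := by
      have := hms 0 h0mem
      rwa [hX0, hm0] at this
    have h1 : 0 ≤ (Afun lam tc)⁻¹ := (inv_pos.2 (Afun_pos _ _)).le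
    have := mul_nonneg h1 (show 0 ≤ ρ + r₀ α by linarith)
    have := mul_nonneg (show 0 ≤ 2 * ρ by linarith) (show 0 ≤ 1 - (Afun lam tc)⁻¹ by linarith)
    linarith
  have hγ0 : 0 ≤ γ := by rw [hγ]; exact le_min (abs_nonneg _) (abs_nonneg _)
  have hf : ∀ s ∈ Icc 0 tc, γ ≤ ffun (r (s, X s) + m (s, X s)) := fun s hs => by
    rw [hγ]; exact ffun_ge_min hL0 (hetaL s hs) (hetaU s hs)
  -- the Riccati inequality
  set P : ℝ → ℝ := fun s => Afun lam s * √(kfun (r (s, X s) + m (s, X s))) * R (s, X s) with hP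
  have Pc : ContinuousOn P (Icc 0 tc) :=
    (hA.continuousOn.mul (kfun_continuous.comp_continuousOn (rc.add mc)).sqrt).mul Rc
  have Pd : ∀ s ∈ Ioo 0 tc, ∃ P', HasDerivAt P P' s ∧ P' ≤ - (γ * (Afun lam s)⁻¹ * P s ^ 2) := by
    intro s hs
    have hs' : s ∈ Ioc 0 tc := ⟨hs.1, hs.2.le⟩
    have hs'' : s ∈ Icc 0 tc := ⟨hs.1.le, hs.2.le⟩
    obtain ⟨-, d1, d2⟩ := hder s hs'
    have d3' : HasDerivAt (fun s => kfun (r (s, X s) + m (s, X s))) (kder (r (s, X s) + m (s, X s)) * (2 * κ (s, X s) * N (s, X s))) s :=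
      HasDerivAt.comp (h₂ := kfun) s (kfun_hasDerivAt (r (s, X s) + m (s, X s))) d1
    have d3 := d3'.sqrt (kfun_pos _).ne'
    have d4 := ((Afun_hasDerivAt lam s).mul d3).mul d2
    refine ⟨_, d4, ?_⟩
    have hN1 := hNs s hs''
    have hf1 := hf s hs''
    have hA1 := Afun_pos lam s
    rw [ffun_eq] at hf1
    simp only [hP, Function.comp, Pi.mul_apply, hκdef]
    generalize r (s, X s) + m (s, X s) = η at *
    have hk := kfun_pos η
    have hq : 0 < √(kfun η) := Real.sqrt_pos.2 hk
    have hqq : √(kfun η) ^ 2 = kfun η := Real.sq_sqrt hk.le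
    rw [← hqq]
    rw [Real.sqrt_sq hq.le]
    generalize √(kfun η) = q at *
    generalize R (s, X s) = ra at *
    generalize N (s, X s) = na at *
    generalize kder η = kd at *
    generalize Afun lam s = A at *
    rw [le_div_iff₀ hq] at hf1
    have e1 : (lam / 2 * A * q + A * (kd * (2 * q ^ 2 * na) / (2 * q))) * ra
        + A * q * (-(kd * (ra + na)) * ra - lam / 2 * (ra - na))
        = - (kd * (A * q * ra ^ 2)) + (lam/2) * (A * q) * na := by
      field_simp
      ring
    have e2 : γ * A⁻¹ * (A * q * ra) ^ 2 = γ * q * (A * q * ra ^ 2) := by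
      field_simp
    rw [e1, e2]
    have z1 : 0 ≤ A * q * ra ^ 2 := by positivity
    have z2 := mul_le_mul_of_nonneg_right hf1 z1
    have z3 : (lam/2) * (A * q) * na ≤ 0 := mul_nonpos_of_nonneg_of_nonpos (by positivity) hN1
    linarith
  have hP0 : P 0 = √(kfun (2 * r₀ α)) * deriv r₀ α := by
    simp only [hP, hX0, hr0, hm0, hR0]
    rw [show Afun lam 0 = 1 by simp [Afun], one_mul, two_mul]
  have hk0 : 0 < √(kfun (2 * r₀ α)) := Real.sqrt_pos.2 (kfun_pos _)
  have hP0neg : P 0 < 0 := by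
    rw [hP0]; exact mul_neg_of_pos_of_neg hk0 (hd α le_rfl)
  have Pneg : ∀ s ∈ Icc 0 tc, P s < 0 := by
    have : AntitoneOn P (Icc 0 tc) := by
      apply antitoneOn_of_deriv_nonpos (convex_Icc _ _) Pc
      · intro s hs
        rw [interior_Icc] at hs
        obtain ⟨P', h, -⟩ := Pd s hs
        exact h.differentiableAt.differentiableWithinAt
      · intro s hs
        rw [interior_Icc] at hs
        obtain ⟨P', h, h2⟩ := Pd s hs
        rw [h.deriv]
        have := Afun_pos lam s
        have : 0 ≤ γ * (Afun lam s)⁻¹ * P s ^ 2 := by positivity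
        linarith
    intro s hs
    exact (this h0mem hs hs.1).trans_lt hP0neg
  have hAinv : ∀ s, HasDerivAt (fun s => (Afun lam s)⁻¹) (-(lam/2) * (Afun lam s)⁻¹) s := by
    intro s
    have hA1 := Afun_pos lam s
    have h1 := (Afun_hasDerivAt lam s).inv hA1.ne'
    rw [show -(lam/2) * (Afun lam s)⁻¹ = -(lam / 2 * Afun lam s) / Afun lam s ^ 2 by
      field_simp]
    exact h1
  have hmono : MonotoneOn (fun s => (P s)⁻¹ + γ * (2/lam) * (Afun lam s)⁻¹) (Icc 0 tc) := by
    apply monotoneOn_of_deriv_nonneg (convex_Icc _ _)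
    · exact (Pc.inv₀ (fun s hs => (Pneg s hs).ne)).add
        (continuousOn_const.mul (hA.continuousOn.inv₀ (fun s _ => (Afun_pos lam s).ne')))
    · intro s hs
      rw [interior_Icc] at hs
      obtain ⟨P', h, -⟩ := Pd s hs
      exact ((h.inv (Pneg s ⟨hs.1.le, hs.2.le⟩).ne).add
        ((hAinv s).const_mul (γ * (2/lam)))).differentiableAt.differentiableWithinAt
    · intro s hs
      rw [interior_Icc] at hs
      obtain ⟨P', h, h2⟩ := Pd s hs
      have hPn := Pneg s ⟨hs.1.le, hs.2.le⟩
      have h3 : HasDerivAt (fun s => (P s)⁻¹ + γ * (2/lam) * (Afun lam s)⁻¹) _ s :=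
        (h.inv hPn.ne).add ((hAinv s).const_mul (γ * (2/lam)))
      rw [h3.deriv]
      have hsq : 0 < P s ^ 2 := sq_pos_of_neg hPn
      have h4 : γ * (Afun lam s)⁻¹ ≤ -P' / P s ^ 2 := by
        rw [le_div_iff₀ hsq]; linarith
      have h5 : γ * (2/lam) * (-(lam/2) * (Afun lam s)⁻¹) = - (γ * (Afun lam s)⁻¹) := by
        field_simp
      rw [h5]; linarith
  have hfin := hmono h0mem (show tc ∈ Icc 0 tc from ⟨htc.le, le_rfl⟩) htc.le
  simp only [show Afun lam 0 = 1 by simp [Afun], inv_one, mul_one] at hfin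
  have hPt : (P tc)⁻¹ < 0 := inv_lt_zero.2 (Pneg tc ⟨htc.le, le_rfl⟩)
  have hroot' : γ * (2/lam) * (1 - (Afun lam tc)⁻¹) * (-P 0) = 1 := by
    rw [hP0]
    rw [abs_of_neg (hd α le_rfl)] at hroot
    linarith
  have : γ * (2/lam) * (1 - (Afun lam tc)⁻¹) = -(P 0)⁻¹ := by
    rw [← inv_neg]
    exact eq_inv_of_mul_eq_one_left hroot'
  linarith

/-- main shock-formation criterion: under the stated conditions on
the initial Riemann function `r₀` at some `α`, if the critical-time equation has a
root `t_c > 0` and the selection inequality holds on `[0, t_c]`, then a singularity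
forms by time `t_c`: no `C²` solution of the diagonal system with initial data
`(r₀, −r₀)` — satisfying the a priori bound and admitting jointly `C¹`
characteristic flows with positive compression ratios and a `C¹` correspondence
map — can exist on `[0,T) × ℝ` for any `T > t_c`. -/
theorem shock_formation_criterion
    (lam : ℝ) (hlam : 0 < lam)
    (r₀ : ℝ → ℝ)
    (hr₀reg : ContDiff ℝ 1 r₀)
    (hr₀bdd : ∃ C : ℝ, ∀ x : ℝ, |r₀ x| ≤ C)
    (hr₀'bdd : ∃ C : ℝ, ∀ x : ℝ, |deriv r₀ x| ≤ C)
    (rinf : ℝ) (hrinf : Filter.Tendsto r₀ Filter.atTop (nhds rinf))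
    (δ : ℝ) (hδ : δ = kfun (2 * ⨆ z : ℝ, |r₀ z|))
    (α : ℝ)
    -- conditions on the initial profile at α
    (hcond₁ : deriv r₀ α * (r₀ α + rinf) < 0)
    (hcond₂ : ∀ x : ℝ, α ≤ x → deriv r₀ x * r₀ α < 0)
    (hcond₃ : 0 < r₀ α * rinf ∨ rinf = 0)
    -- the explicit lower bound η_L⁺ and the quantity γ⁺
    (etaLp : ℝ → ℝ)
    (hetaLp : ∀ t : ℝ, etaLp t = (Afun lam t)⁻¹ * (r₀ (α + 2*δ*t) + r₀ α)
      + 2 * r₀ (α + 2*δ*t) * (1 - (Afun lam t)⁻¹))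
    (γp : ℝ → ℝ)
    (hγp : ∀ t : ℝ, γp t = min |ffun (etaLp t)| |ffun (2 * r₀ α)|)
    -- existence of a root t_c of the critical-time equation
    (tc : ℝ) (htc : 0 < tc)
    (hroot : 1 - (2/lam) * (1 - (Afun lam tc)⁻¹) * γp tc * |deriv r₀ α| *
      Real.sqrt (kfun (2 * r₀ α)) = 0)
    -- the selection inequality on [0, t_c]
    (hsel : ∀ t ∈ Set.Icc (0:ℝ) tc,
      0 ≤ -2 * (Afun lam t - 1) / Real.sqrt (kfun (etaLp t))
        + (2 - (Afun lam t)⁻¹) / Real.sqrt (kfun (2 * r₀ α))) :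
    ∀ T : ℝ, tc < T →
      ¬ ∃ (r l x₁ x₂ : ℝ → ℝ → ℝ) (bmap : ℝ → ℝ → ℝ),
        -- C² solution of the diagonal system on [0,T) × ℝ
        ContDiffOn ℝ 2 (Function.uncurry r) (Set.Ico 0 T ×ˢ (Set.univ : Set ℝ)) ∧
        ContDiffOn ℝ 2 (Function.uncurry l) (Set.Ico 0 T ×ˢ (Set.univ : Set ℝ)) ∧
        (∀ t ∈ Set.Ico (0:ℝ) T, ∀ x : ℝ,
          deriv (fun s => r s x) t + kfun (etafun r l t x) * deriv (fun y => r t y) x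
            = -(lam/2) * (r t x + l t x)) ∧
        (∀ t ∈ Set.Ico (0:ℝ) T, ∀ x : ℝ,
          deriv (fun s => l s x) t - kfun (etafun r l t x) * deriv (fun y => l t y) x
            = -(lam/2) * (r t x + l t x)) ∧
        -- initial data (r₀, −r₀)
        (∀ x : ℝ, r 0 x = r₀ x) ∧
        (∀ x : ℝ, l 0 x = -r₀ x) ∧
        -- a priori bound
        (∀ t ∈ Set.Ico (0:ℝ) T, ∀ x y : ℝ,
          |r t x - l t y| ≤ 2 * ⨆ z : ℝ, |r₀ z|) ∧
        -- jointly C¹ characteristic flows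
        ContDiffOn ℝ 1 (Function.uncurry x₁) (Set.Ico 0 T ×ˢ (Set.univ : Set ℝ)) ∧
        ContDiffOn ℝ 1 (Function.uncurry x₂) (Set.Ico 0 T ×ˢ (Set.univ : Set ℝ)) ∧
        (∀ a : ℝ, x₁ 0 a = a) ∧
        (∀ a : ℝ, ∀ t ∈ Set.Ico (0:ℝ) T,
          HasDerivAt (fun s => x₁ s a) (kfun (etafun r l t (x₁ t a))) t) ∧
        (∀ b : ℝ, x₂ 0 b = b) ∧
        (∀ b : ℝ, ∀ t ∈ Set.Ico (0:ℝ) T,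
          HasDerivAt (fun s => x₂ s b) (-(kfun (etafun r l t (x₂ t b)))) t) ∧
        -- positive compression ratios
        (∀ t ∈ Set.Ico (0:ℝ) T, ∀ a : ℝ, 0 < deriv (fun a' => x₁ t a') a) ∧
        (∀ t ∈ Set.Ico (0:ℝ) T, ∀ b : ℝ, 0 < deriv (fun b' => x₂ t b') b) ∧
        -- C¹ correspondence map
        ContDiffOn ℝ 1 (Function.uncurry bmap) (Set.Ico 0 T ×ˢ (Set.univ : Set ℝ)) ∧
        (∀ t ∈ Set.Ico (0:ℝ) T, ∀ a : ℝ, x₁ t a = x₂ t (bmap t a)) := by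
  rintro T hT ⟨r, l, x₁, x₂, bmap, hr, hl, her, hel, hr0, hl0, hbd, -, -, hx0, hxd, -⟩
  have hbdd := hr₀bdd
  have hdiff : Differentiable ℝ r₀ := hr₀reg.differentiable (by norm_num)
  have hTpos : 0 < T := htc.trans hT
  have hderc : ∀ t ∈ Ico (0:ℝ) T, ∀ x, kfun (etafun r l t x) ≤ δ := by
    intro t ht x
    rw [hδ]; exact kfun_le_of_abs (hbd t ht x x)
  have hα0 : r₀ α ≠ 0 := by
    intro h
    have := hcond₂ α le_rfl
    rw [h] at this; simp at this
  have hδ0 : 0 < δ := by rw [hδ]; exact kfun_pos _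
  have hle : α ≤ α + 2 * δ * tc := by
    have := mul_pos hδ0 htc
    linarith
  rw [hγp, hetaLp] at hroot
  rcases lt_or_gt_of_ne hα0 with hneg | hpos
  · -- reflect
    have hd : ∀ x, α ≤ x → deriv (fun x => - r₀ x) x < 0 := by
      intro x hx
      have h1 := hcond₂ x hx
      have h2 : 0 < deriv r₀ x := by nlinarith
      rw [deriv.fun_neg]; linarith
    have hanti : AntitoneOn (fun x => - r₀ x) (Ici α) := by
      apply antitoneOn_of_deriv_nonpos (convex_Ici α) hdiff.continuous.neg.continuousOn
        hdiff.neg.differentiableOn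
      intro x hx
      rw [interior_Ici] at hx
      exact (hd x (le_of_lt hx)).le
    have hinf : 0 ≤ - rinf := by
      rcases hcond₃ with h | h
      · nlinarith
      · rw [h]; simp
    have hρ0 : 0 ≤ - r₀ (α + 2 * δ * tc) := by
      refine hinf.trans ?_
      refine le_of_tendsto hrinf.neg ?_
      filter_upwards [eventually_ge_atTop (α + 2 * δ * tc)] with x hx
      exact hanti (show α + 2 * δ * tc ∈ Ici α from hle) (show x ∈ Ici α from hle.trans hx) hx
    have heta : ∀ t x, - r t x + l t x = - etafun r l t x := by
      intro t x; rw [etafun]; ring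
    refine core lam hlam (fun p => - r p.1 p.2) (fun p => l p.1 p.2) T tc htc hT hr.neg hl ?_ ?_
      (fun x => - r₀ x) (fun x => by simp [hr0]) (fun x => by simp [hl0]) δ ?_
      (fun s => x₁ s α) α (hx0 α) ?_ hd hanti _ rfl hρ0 _ rfl ?_
    · intro t ht x
      have := her t (Ioo_subset_Ico_self ht) x
      simp only [heta, kfun_neg, deriv.fun_neg]
      linarith
    · intro t ht x
      have := hel t (Ioo_subset_Ico_self ht) x
      simp only [heta, kfun_neg]
      linarith
    · intro t ht x
      simp only [heta, kfun_neg]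
      exact hderc t ht x
    · intro t ht
      simp only [heta, kfun_neg]
      exact hxd α t ht
    · simp only [deriv.fun_neg, abs_neg]
      rw [show 2 * -r₀ α = -(2 * r₀ α) by ring, kfun_neg, ffun_neg, abs_neg,
        show (Afun lam tc)⁻¹ * (-r₀ (α + 2 * δ * tc) + -r₀ α)
          + 2 * -r₀ (α + 2 * δ * tc) * (1 - (Afun lam tc)⁻¹)
          = -((Afun lam tc)⁻¹ * (r₀ (α + 2 * δ * tc) + r₀ α)
          + 2 * r₀ (α + 2 * δ * tc) * (1 - (Afun lam tc)⁻¹)) by ring, ffun_neg, abs_neg]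
      exact hroot
  · have hd : ∀ x, α ≤ x → deriv r₀ x < 0 := by
      intro x hx
      have h1 := hcond₂ x hx
      nlinarith
    have hanti : AntitoneOn r₀ (Ici α) := by
      apply antitoneOn_of_deriv_nonpos (convex_Ici α) hdiff.continuous.continuousOn
        hdiff.differentiableOn
      intro x hx
      rw [interior_Ici] at hx
      exact (hd x (le_of_lt hx)).le
    have hinf : 0 ≤ rinf := by
      rcases hcond₃ with h | h
      · nlinarith
      · rw [h]
    have hρ0 : 0 ≤ r₀ (α + 2 * δ * tc) := by
      refine hinf.trans ?_
      refine le_of_tendsto hrinf ?_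
      filter_upwards [eventually_ge_atTop (α + 2 * δ * tc)] with x hx
      exact hanti (show α + 2 * δ * tc ∈ Ici α from hle) (show x ∈ Ici α from hle.trans hx) hx
    have heta : ∀ t x, r t x + - l t x = etafun r l t x := by
      intro t x; rw [etafun]; ring
    refine core lam hlam (fun p => r p.1 p.2) (fun p => - l p.1 p.2) T tc htc hT hr hl.neg ?_ ?_
      r₀ (fun x => by simp [hr0]) (fun x => by simp [hl0]) δ ?_
      (fun s => x₁ s α) α (hx0 α) ?_ hd hanti _ rfl hρ0 _ rfl hroot
    · intro t ht x
      have := her t (Ioo_subset_Ico_self ht) x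
      simp only [heta]
      linarith
    · intro t ht x
      have := hel t (Ioo_subset_Ico_self ht) x
      simp only [heta, deriv.fun_neg]
      linarith
    · intro t ht x
      simp only [heta]
      exact hderc t ht x
    · intro t ht
      simp only [heta]
      exact hxd α t ht
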